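/- Suppose t is drawn at random from the probability distribution on ℒ with density proportional to e^{−q(t)}. Then for every standard basis vector e_j of ℝ^d contained in ℒ, the random variable ⟨t, e_j⟩ satisfies Var(⟨t, e_j⟩) ≤ Γ/k^{ν−1} with Γ = 14ν⁴R/(ω^{6ν−3}r²). -/

import Mathlib

open MeasureTheory Real InnerProductSpace

noncomputable section

variable {ν : ℕ}

/-- The coordinate index set of `ℝ^d`, `d = k_1 + ⋯ + k_ν`. -/
abbrev Idx (kk : Fin ν → ℕ) : Type := Σ j : Fin ν, Fin (kk j)

/-- The multi-index set, of cardinality `n = k_1 ⋯ k_ν`. -/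
abbrev MIdx (kk : Fin ν → ℕ) : Type := ∀ j : Fin ν, Fin (kk j)

/-- The ambient Euclidean space `ℝ^d`. -/
abbrev Spc (kk : Fin ν → ℕ) : Type := EuclideanSpace ℝ (Idx kk)

/-- The coordinate functional `t ↦ τ_{j,i}`. -/
def coordL (kk : Fin ν → ℕ) (p : Idx kk) : Spc kk →ₗ[ℝ] ℝ where
  toFun t := t p
  map_add' _ _ := rfl
  map_smul' _ _ := rfl

/-- The linear functional `t ↦ ⟨a_m, t⟩ = τ_{1,m_1} + ⋯ + τ_{ν,m_ν}`. -/
def linF (kk : Fin ν → ℕ) (m : MIdx kk) : Spc kk →ₗ[ℝ] ℝ :=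
  ∑ j : Fin ν, coordL kk ⟨j, m j⟩

/-- The column `a_m` of the constraint matrix `A`. -/
def colA (kk : Fin ν → ℕ) (m : MIdx kk) : Spc kk :=
  (WithLp.equiv 2 (Idx kk → ℝ)).symm (fun p => if p.2 = m p.1 then 1 else 0)

/-- The quadratic form `q(t) = (1/2) ∑_m α_m (τ_{1,m_1} + ⋯ + τ_{ν,m_ν})²`. -/
def qform (kk : Fin ν → ℕ) (α : MIdx kk → ℝ) (t : Spc kk) : ℝ :=
  (1/2) * ∑ m : MIdx kk, α m * (linF kk m t)^2

/-- The symmetric positive semidefinite matrix `B` with `q(t) = (1/2)⟨t, Bt⟩`,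
given explicitly as `B = ∑_m α_m a_m a_mᵀ`. -/
def Bmat (kk : Fin ν → ℕ) (α : MIdx kk → ℝ) : Spc kk →ₗ[ℝ] Spc kk :=
  ∑ m : MIdx kk, α m • (linF kk m).smulRight (colA kk m)

/-- The sup norm `‖t‖_∞`. -/
def supNorm (kk : Fin ν → ℕ) (t : Spc kk) : ℝ := ‖(WithLp.equiv 2 (Idx kk → ℝ)) t‖

/-- The subspace `ℒ = {t : τ_{j,k_j} = 0 for j = 2,…,ν}`. -/
def Lsub (kk : Fin ν → ℕ) (hk : ∀ j, 0 < kk j) : Submodule ℝ (Spc kk) :=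
  ⨅ (j : {j : Fin ν // (j : ℕ) ≠ 0}),
    LinearMap.ker (coordL kk ⟨j.1, ⟨kk j.1 - 1, Nat.sub_lt (hk j.1) one_pos⟩⟩)

/-- The expectation of `f` under the probability distribution on `ℒ` with density
proportional to `e^{−q(t)}`. -/
def expL (kk : Fin ν → ℕ) (hk : ∀ j, 0 < kk j) (α : MIdx kk → ℝ) (f : Spc kk → ℝ) : ℝ :=
  (∫ t : ↥(Lsub kk hk), f (t : Spc kk) * Real.exp (-(qform kk α (t : Spc kk)))) /
    (∫ t : ↥(Lsub kk hk), Real.exp (-(qform kk α (t : Spc kk))))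

lemma gauss_aux {E : Type*} [NormedAddCommGroup E] [InnerProductSpace ℝ E]
    [FiniteDimensional ℝ E] [MeasurableSpace E] [BorelSpace E]
    {ι : Type*} [Fintype ι] (α : ι → ℝ) (L : ι → E →L[ℝ] ℝ) (l : E →L[ℝ] ℝ) (c : ℝ) (hc : 0 ≤ c)
    (hpos : ∀ t, ∑ m, α m * (L m t)^2 = 0 → t = 0)
    (hl : ∀ t, (l t)^2 ≤ c * ∑ m, α m * (L m t)^2) :
    (∫ t : E, (l t)^2 * Real.exp (-((1/2) * ∑ m, α m * (L m t)^2))) /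
      (∫ t : E, Real.exp (-((1/2) * ∑ m, α m * (L m t)^2))) ≤ c := by
  set g : E → ℝ := fun t => Real.exp (-((1/2) * ∑ m, α m * (L m t)^2)) with hg
  change (∫ t : E, (l t)^2 * g t) / (∫ t : E, g t) ≤ c
  by_cases h1 : Integrable g; swap
  · rw [integral_undef h1, div_zero]; exact hc
  by_cases h2 : Integrable (fun t => (l t)^2 * g t); swap
  · rw [integral_undef h2, zero_div]; exact hc
  have hgpos : ∀ t, 0 < g t := fun t => Real.exp_pos _
  have hI : 0 ≤ ∫ t, g t := integral_nonneg (fun t => (hgpos t).le)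
  -- the bilinear form
  let T : E →ₗ[ℝ] Module.Dual ℝ E :=
    ∑ m, α m • ((L m : E →ₗ[ℝ] ℝ).smulRight (L m : E →ₗ[ℝ] ℝ))
  have hT : ∀ t s, T t s = ∑ m, α m * (L m t * L m s) := by
    intro t s
    simp [T, LinearMap.sum_apply]
  have hinj : Function.Injective T := by
    rw [injective_iff_map_eq_zero]
    intro t ht
    apply hpos
    have := hT t t
    rw [ht] at this
    simp only [LinearMap.zero_apply] at this
    rw [this]
    simp [sq]
  have hsurj : Function.Surjective T :=
    (LinearMap.injective_iff_surjective_of_finrank_eq_finrank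
      (Subspace.dual_finrank_eq).symm).1 hinj
  obtain ⟨u, hu⟩ := hsurj (l : E →ₗ[ℝ] ℝ)
  have hu' : ∀ s, l s = ∑ m, α m * (L m u * L m s) := by
    intro s
    rw [← hT, hu]; rfl
  have hlu : l u ≤ c := by
    have h := hl u
    have e : ∑ m, α m * (L m u)^2 = l u := by
      rw [hu' u]; simp [sq]
    rw [e] at h
    by_contra hcon
    push Not at hcon
    nlinarith
  -- integration by parts
  have hgd : ∀ t, HasFDerivAt g (g t • (-((1/2 : ℝ) • ∑ m, α m • ((2 * L m t) • L m)))) t := by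
    intro t
    apply HasFDerivAt.exp
    apply HasFDerivAt.neg
    apply HasFDerivAt.const_mul
    apply HasFDerivAt.fun_sum
    intro m _
    apply HasFDerivAt.const_mul
    have := ((L m).hasFDerivAt (x := t)).pow 2
    simpa using this
  have hgdu : ∀ t, fderiv ℝ g t u = - (l t * g t) := by
    intro t
    rw [(hgd t).fderiv, hu' t]
    simp only [ContinuousLinearMap.smul_apply, ContinuousLinearMap.neg_apply,
      ContinuousLinearMap.sum_apply, smul_eq_mul]
    rw [Finset.mul_sum, ← Finset.sum_neg_distrib, Finset.mul_sum, Finset.sum_mul,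
      ← Finset.sum_neg_distrib]
    refine Finset.sum_congr rfl fun m _ => ?_
    ring
  have hgc : Continuous g := by
    rw [continuous_iff_continuousAt]; exact fun t => (hgd t).continuousAt
  have h3 : Integrable (fun t => l t * g t) := by
    refine Integrable.mono' (h1.add h2) (by fun_prop) ?_
    refine Filter.Eventually.of_forall fun t => ?_
    simp only [Pi.add_apply, norm_mul, Real.norm_eq_abs, abs_of_pos (hgpos t)]
    have : |l t| ≤ 1 + (l t)^2 := by
      rw [← sq_abs]; nlinarith [sq_nonneg (|l t| - 1), abs_nonneg (l t)]
    nlinarith [hgpos t]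
  have hparts := integral_mul_fderiv_eq_neg_fderiv_mul_of_integrable (μ := volume) (𝕜 := ℝ)
    (f := fun t => l t) (g := g) (v := u)
    (by simpa using h1.const_mul (l u))
    (by
      simp only [hgdu]
      refine (h2.neg).congr (Filter.Eventually.of_forall fun t => ?_)
      simp only [Pi.neg_apply]; ring)
    h3 (by fun_prop) (fun t _ => (hgd t).differentiableAt)
  have key : ∫ t, (l t)^2 * g t = l u * ∫ t, g t := by
    simp only [hgdu] at hparts
    have e1 : ∫ t, l t * -(l t * g t) = - ∫ t, (l t)^2 * g t := by
      rw [← integral_neg]; congr 1; ext t; ring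
    have e2 : ∀ t, fderiv ℝ (fun t => l t) t = l := fun t => l.fderiv
    simp only [e2, integral_const_mul] at hparts
    rw [e1] at hparts
    linarith
  rw [key]
  apply div_le_of_le_mul₀ hI hc
  exact mul_le_mul_of_nonneg_right hlu hI

lemma update_sum_le (kk : Fin ν → ℕ) (F : MIdx kk → ℝ) (hF : ∀ m, 0 ≤ F m)
    (j : Fin ν) (i : Fin (kk j)) :
    ∑ m : MIdx kk, F (Function.update m j i) ≤ kk j * ∑ m : MIdx kk, F m := by
  have h1 : (kk j : ℝ) * ∑ m : MIdx kk, F m = ∑ x : Fin (kk j) × MIdx kk, F x.2 := by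
    rw [Fintype.sum_prod_type]; simp
  let φ : MIdx kk → Fin (kk j) × MIdx kk := fun m => (m j, Function.update m j i)
  have hφ : Function.Injective φ := by
    intro a b hab
    simp only [φ, Prod.mk.injEq] at hab
    ext1 x
    by_cases hx : x = j
    · subst hx; exact hab.1
    · have := congrFun hab.2 x
      simpa [Function.update_of_ne hx] using this
  rw [h1]
  have h2 : ∑ m : MIdx kk, F (Function.update m j i) =
      ∑ x ∈ Finset.univ.map ⟨φ, hφ⟩, F x.2 := by
    rw [Finset.sum_map]; rfl
  rw [h2]
  exact Finset.sum_le_sum_of_subset_of_nonneg (Finset.subset_univ _) (fun x _ _ => hF _)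

lemma linF_apply (kk : Fin ν → ℕ) (m : MIdx kk) (t : Spc kk) :
    linF kk m t = ∑ j, t ⟨j, m j⟩ := by
  rw [linF, LinearMap.sum_apply]
  rfl

lemma avg_sq_le {ι : Type*} [Fintype ι] (F : ι → ℝ) (n : ℝ) (hn : 0 < n)
    (hc : (Fintype.card ι : ℝ) = n) : ((∑ m, F m) / n)^2 ≤ (∑ m, (F m)^2) / n := by
  have h := sq_sum_le_card_mul_sum_sq (s := Finset.univ) (f := F)
  rw [Finset.card_univ, hc] at h
  rw [div_pow, div_le_div_iff₀ (by positivity) hn]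
  nlinarith

/-- coordinates are controlled by the sum of squares. -/
lemma coord_bound (hν : 2 ≤ ν) (kk : Fin ν → ℕ) (hk : ∀ j, 0 < kk j)
    (W : ℝ) (hW : 0 < W) (hW2 : ∀ j, (kk j : ℝ) * W ≤ ∏ l, (kk l : ℝ))
    (t : Spc kk) (ht : t ∈ Lsub kk hk) (p : Idx kk) :
    (t p)^2 ≤ (2 * (ν : ℝ) + 1)^2 * ((∑ m : MIdx kk, (linF kk m t)^2) / W) := by
  set n : ℝ := ∏ l, (kk l : ℝ) with hn
  have hn0 : 0 < n := Finset.prod_pos fun l _ => by exact_mod_cast hk l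
  have hcard : (Fintype.card (MIdx kk) : ℝ) = n := by
    simp [Fintype.card_pi, hn]
  set S : ℝ := ∑ m : MIdx kk, (linF kk m t)^2 with hS
  have hS0 : 0 ≤ S := Finset.sum_nonneg fun _ _ => sq_nonneg _
  set D : ℝ := Real.sqrt (S / W) with hD
  have hD0 : 0 ≤ D := Real.sqrt_nonneg _
  have hD2 : D^2 = S / W := Real.sq_sqrt (by positivity)
  let mu : Fin ν → ℝ := fun j => (∑ m : MIdx kk, t ⟨j, m j⟩) / n
  let M : ℝ := (∑ m : MIdx kk, linF kk m t) / n
  have hM : M = ∑ j, mu j := by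
    simp only [M, mu, linF_apply]
    rw [Finset.sum_comm, Finset.sum_div]
  have hupd : ∀ (m : MIdx kk) (j : Fin ν) (i : Fin (kk j)),
      linF kk (Function.update m j i) t = linF kk m t - t ⟨j, m j⟩ + t ⟨j, i⟩ := by
    intro m j i
    rw [linF_apply, linF_apply, ← Finset.add_sum_erase _ _ (Finset.mem_univ j),
      ← Finset.add_sum_erase (a := j) _ (fun j => t ⟨j, m j⟩) (Finset.mem_univ j)]
    have : ∑ x ∈ Finset.univ.erase j, t ⟨x, Function.update m j i x⟩ =
        ∑ x ∈ Finset.univ.erase j, t ⟨x, m x⟩ := by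
      refine Finset.sum_congr rfl fun x hx => ?_
      rw [Function.update_of_ne (Finset.ne_of_mem_erase hx)]
    rw [this, Function.update_self]
    ring
  have hA : ∀ (j : Fin ν) (i : Fin (kk j)), |M - mu j + t ⟨j, i⟩| ≤ D := by
    intro j i
    have e : M - mu j + t ⟨j, i⟩ = (∑ m : MIdx kk, linF kk (Function.update m j i) t) / n := by
      simp only [hupd, M, mu, Finset.sum_add_distrib, Finset.sum_sub_distrib, Finset.sum_const,
        Finset.card_univ, nsmul_eq_mul, hcard]
      field_simp
    apply abs_le_of_sq_le_sq _ hD0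
    rw [hD2, e]
    refine (avg_sq_le _ n hn0 hcard).trans ?_
    have h1 := update_sum_le kk (fun m => (linF kk m t)^2) (fun _ => sq_nonneg _) j i
    rw [div_le_div_iff₀ hn0 hW]
    calc _ ≤ ((kk j : ℝ) * S) * W := mul_le_mul_of_nonneg_right h1 hW.le
      _ = S * (kk j * W) := by ring
      _ ≤ S * n := mul_le_mul_of_nonneg_left (hW2 j) hS0
  let z : Fin ν := ⟨0, by omega⟩
  have hMD : |M| ≤ D := by
    apply abs_le_of_sq_le_sq _ hD0
    rw [hD2]
    refine (avg_sq_le _ n hn0 hcard).trans ?_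
    have h1 : (1 : ℝ) ≤ kk z := by exact_mod_cast hk z
    rw [div_le_div_iff₀ hn0 hW]
    have := hW2 z
    apply mul_le_mul_of_nonneg_left _ hS0
    nlinarith
  have hmu : ∀ j : Fin ν, j ≠ z → |mu j| ≤ 2 * D := by
    intro j hj
    have hj0 : (j : ℕ) ≠ 0 := fun h => hj (Fin.ext h)
    have h0 : t ⟨j, ⟨kk j - 1, Nat.sub_lt (hk j) one_pos⟩⟩ = 0 := by
      rw [Lsub, Submodule.mem_iInf] at ht
      exact ht ⟨j, hj0⟩
    have := hA j ⟨kk j - 1, Nat.sub_lt (hk j) one_pos⟩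
    rw [h0] at this
    rw [abs_le] at *
    constructor <;> linarith [this.1, this.2, hMD.1, hMD.2]
  have hν' : (2 : ℝ) ≤ ν := by exact_mod_cast hν
  have hmuz : |mu z| ≤ (2 * (ν : ℝ) - 1) * D := by
    rw [← Finset.add_sum_erase _ _ (Finset.mem_univ z)] at hM
    have h1 : |∑ x ∈ Finset.univ.erase z, mu x| ≤ ((ν : ℝ) - 1) * (2 * D) := by
      refine (Finset.abs_sum_le_sum_abs _ _).trans ?_
      refine (Finset.sum_le_card_nsmul _ _ (2 * D)
        fun x hx => hmu x (Finset.ne_of_mem_erase hx)).trans ?_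
      rw [Finset.card_erase_of_mem (Finset.mem_univ z), Finset.card_univ, Fintype.card_fin,
        nsmul_eq_mul, Nat.cast_sub (by omega), Nat.cast_one]
    rw [abs_le] at *
    constructor <;> linarith [h1.1, h1.2, hMD.1, hMD.2]
  have hmu' : ∀ j, |mu j| ≤ (2 * (ν : ℝ) - 1) * D := by
    intro j
    by_cases hj : j = z
    · rw [hj]; exact hmuz
    · refine (hmu j hj).trans ?_
      apply mul_le_mul_of_nonneg_right _ hD0
      linarith
  have hfin : |t p| ≤ (2 * (ν : ℝ) + 1) * D := by
    obtain ⟨j, i⟩ := p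
    have h1 := hA j i
    have h2 := hmu' j
    rw [abs_le] at *
    constructor <;> linarith [h1.1, h1.2, h2.1, h2.2, hMD.1, hMD.2]
  rw [← hD2, ← mul_pow]
  exact sq_le_sq' (by linarith [(abs_le.1 hfin).1]) (abs_le.1 hfin).2

/-- If `t` is drawn from the distribution on `ℒ` with density proportional
to `e^{−q(t)}`, then for every standard basis vector `e_j ∈ ℒ` the random variable `⟨t, e_j⟩`
has variance at most `Γ/k^{ν−1}` with `Γ = 14ν⁴R/(ω^{6ν−3}r²)`. -/
theorem statement7 (ν : ℕ) (hν : 2 ≤ ν) (kk : Fin ν → ℕ) (hkk : ∀ j, 2 ≤ kk j)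
    (hk : ∀ j, 0 < kk j)
    (r R ω k : ℝ) (hr : 0 < r) (hrR : r ≤ R) (hω0 : 0 < ω) (hω1 : ω ≤ 1)
    (hωk : 1 ≤ ω * k) (hlow : ∀ j, ω * k ≤ kk j) (hhigh : ∀ j, (kk j : ℝ) ≤ k)
    (α : MIdx kk → ℝ) (hα1 : ∀ m, r ≤ α m) (hα2 : ∀ m, α m ≤ R)
    (p : Idx kk) (hp : EuclideanSpace.single p (1 : ℝ) ∈ Lsub kk hk) :
    expL kk hk α (fun t => (t p)^2) - (expL kk hk α (fun t => t p))^2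
      ≤ (14 * (ν : ℝ)^4 * R / (ω ^ (6 * ν - 3) * r^2)) / k ^ (ν - 1) := by
  have hk0 : 0 < k := by
    by_contra h
    push Not at h
    nlinarith
  have hν' : (2 : ℝ) ≤ ν := by exact_mod_cast hν
  have hR : 0 < R := lt_of_lt_of_le hr hrR
  set W : ℝ := (ω * k) ^ (ν - 1) with hWdef
  have hW : 0 < W := by positivity
  have hW2 : ∀ j, (kk j : ℝ) * W ≤ ∏ l, (kk l : ℝ) := by
    intro j
    rw [← Finset.mul_prod_erase _ _ (Finset.mem_univ j)]
    apply mul_le_mul_of_nonneg_left _ (Nat.cast_nonneg _)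
    have : W = ∏ _l ∈ Finset.univ.erase j, (ω * k) := by
      rw [Finset.prod_const, Finset.card_erase_of_mem (Finset.mem_univ j), Finset.card_univ,
        Fintype.card_fin]
    rw [this]
    exact Finset.prod_le_prod (fun _ _ => by positivity) (fun l _ => hlow l)
  set c : ℝ := (2 * (ν : ℝ) + 1)^2 / (W * r) with hcdef
  have hc0 : 0 ≤ c := by positivity
  have hbd : ∀ t ∈ Lsub kk hk, ∀ p : Idx kk,
      (t p)^2 ≤ c * ∑ m : MIdx kk, α m * (linF kk m t)^2 := by
    intro t ht p
    refine (coord_bound hν kk hk W hW hW2 t ht p).trans ?_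
    have h1 : r * ∑ m : MIdx kk, (linF kk m t)^2 ≤ ∑ m : MIdx kk, α m * (linF kk m t)^2 := by
      rw [Finset.mul_sum]
      exact Finset.sum_le_sum fun m _ => mul_le_mul_of_nonneg_right (hα1 m) (sq_nonneg _)
    calc _ = c * (r * ∑ m : MIdx kk, (linF kk m t)^2) := by
          rw [hcdef]; field_simp
      _ ≤ _ := mul_le_mul_of_nonneg_left h1 hc0
  have hmain : expL kk hk α (fun t => (t p)^2) ≤ c := by
    have := gauss_aux (E := ↥(Lsub kk hk)) α
      (fun m => LinearMap.toContinuousLinearMap ((linF kk m).comp (Lsub kk hk).subtype))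
      (LinearMap.toContinuousLinearMap ((coordL kk p).comp (Lsub kk hk).subtype)) c hc0
      (by
        intro t h
        have h' : ∑ m : MIdx kk, α m * (linF kk m (t : Spc kk))^2 = 0 := h
        apply Subtype.ext
        ext p
        have := hbd t t.2 p
        rw [h', mul_zero] at this
        exact pow_eq_zero_iff (two_ne_zero) |>.1 (le_antisymm this (sq_nonneg _)))
      (fun t => hbd t t.2 p)
    exact this
  have hfin : c ≤ (14 * (ν : ℝ)^4 * R / (ω ^ (6 * ν - 3) * r^2)) / k ^ (ν - 1) := by
    have e : ω ^ (6 * ν - 3) = ω ^ (ν - 1) * ω ^ (5 * ν - 2) := by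
      rw [← pow_add]; congr 1; omega
    have h1 : ω ^ (5 * ν - 2) ≤ 1 := pow_le_one₀ hω0.le hω1
    have h1' : 0 < ω ^ (5 * ν - 2) := by positivity
    have h2 : (2 * (ν : ℝ) + 1)^2 ≤ 14 * (ν : ℝ)^4 := by
      nlinarith [sq_nonneg ((ν : ℝ)), mul_nonneg (sq_nonneg (ν : ℝ)) (sub_nonneg.2 hν'),
        mul_self_nonneg ((ν : ℝ)^2 - 4)]
    rw [div_div, hcdef, hWdef, mul_pow, e]
    rw [div_le_div_iff₀ (by positivity) (by positivity)]
    have h3 : ω ^ (5 * ν - 2) * r ≤ R := by nlinarith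
    have h4 : (2 * (ν : ℝ) + 1)^2 * (ω ^ (5 * ν - 2) * r) ≤ 14 * (ν : ℝ)^4 * R :=
      mul_le_mul h2 h3 (by positivity) (by positivity)
    have h5 := mul_le_mul_of_nonneg_right h4
      (show 0 ≤ ω ^ (ν - 1) * k ^ (ν - 1) * r by positivity)
    linarith
  have := sq_nonneg (expL kk hk α (fun t => t p))
  linarith
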